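/- Let H be the graph (a symmetric binary relation, loops allowed) with vertex set {u0, u1, w0, w1, w2, v}, whose edges are: the loop at v, the edges u0–u1, w0–w1, w1–w2, and an edge between v and each of u0, u1, w0, w1, w2. Then every partial homomorphism of size two of H into itself extends to a full homomorphism from H into itself. -/

import Mathlib

/-- The vertices of the graph `H`: the walk `u0 – u1`, the walk `w0 – w1 – w2`,
and the reflexive vertex `v`. -/
inductive HVert : Type
  | u0 | u1 | w0 | w1 | w2 | v
deriving DecidableEq

/-- The edge relation of the graph `H` (symmetric, loops allowed): the loop at `v`,
the edges `u0 – u1`, `w0 – w1`, `w1 – w2`, and an edge between `v` and every other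
vertex. -/
def HEdge : HVert → HVert → Prop := fun a b =>
  (a = HVert.v ∧ b = HVert.v) ∨
  (a = HVert.u0 ∧ b = HVert.u1) ∨ (a = HVert.u1 ∧ b = HVert.u0) ∨
  (a = HVert.w0 ∧ b = HVert.w1) ∨ (a = HVert.w1 ∧ b = HVert.w0) ∨
  (a = HVert.w1 ∧ b = HVert.w2) ∨ (a = HVert.w2 ∧ b = HVert.w1) ∨
  (a = HVert.v ∧ b ≠ HVert.v) ∨ (b = HVert.v ∧ a ≠ HVert.v)

variable {α β : Type*}

/-- `h` is a homomorphism from the digraph `(α, r)` to the digraph `(β, s)` on the set `D`: a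
partial homomorphism with domain `D` is encoded by a total function whose values off `D` are
irrelevant, and `D = Set.univ` gives the full homomorphisms. Only edges between distinct
vertices need to be preserved. -/
def IsHomOn (r : α → α → Prop) (s : β → β → Prop) (h : α → β) (D : Set α) : Prop :=
  D.Pairwise fun x y => r x y → s (h x) (h y)

/-- A universal vertex of a relation: one joined in both directions to every vertex, itself
included. It can absorb all vertices outside the domain of a partial homomorphism. -/
def IsUniversalVertex (s : β → β → Prop) (c : β) : Prop :=
  ∀ y, s c y ∧ s y c

theorem isHomOn_pair_iff {r : α → α → Prop} {s : β → β → Prop} {h : α → β} {a b : α}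
    (hab : a ≠ b) :
    IsHomOn r s h {a, b} ↔ (r a b → s (h a) (h b)) ∧ (r b a → s (h b) (h a)) :=
  Set.pairwise_pair.trans (forall_prop_of_true hab)

theorem isUniversalVertex_hEdge_v : IsUniversalVertex HEdge HVert.v := by
  intro y
  cases y <;> simp [HEdge]

theorem hgraph_partial_hom_extends_general {r : α → α → Prop} {s : β → β → Prop} {c : β}
    (hc : IsUniversalVertex s c) {h : α → β} {D : Set α} (hD : IsHomOn r s h D) :
    ∃ f : α → β, Set.EqOn f h D ∧ IsHomOn r s f Set.univ := by
  classical
  -- An edge with an endpoint off `D` is sent to a pair containing `c`, hence to an edge.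
  refine ⟨D.piecewise h fun _ => c, D.piecewise_eqOn h _, ?_⟩
  intro x _ y _ hxy hr
  by_cases hx : x ∈ D
  · by_cases hy : y ∈ D
    · simpa only [Set.piecewise_eq_of_mem, hx, hy] using hD hx hy hxy hr
    · simpa only [Set.piecewise_eq_of_notMem _ _ _ hy] using (hc _).2
  · simpa only [Set.piecewise_eq_of_notMem _ _ _ hx] using (hc _).1

theorem hgraph_partial_hom_extends (a b : HVert) (hab : a ≠ b) (a' b' : HVert)
    (h1 : HEdge a b → HEdge a' b') (h2 : HEdge b a → HEdge b' a') :
    ∃ f : HVert → HVert, f a = a' ∧ f b = b' ∧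
      ∀ x y : HVert, x ≠ y → HEdge x y → HEdge (f x) (f y) := by
  obtain ⟨f, hext, hf⟩ := hgraph_partial_hom_extends_general isUniversalVertex_hEdge_v
    (h := Function.update (fun _ => b') a a')
    ((isHomOn_pair_iff hab).2 (by simpa [hab.symm] using And.intro h1 h2))
  exact ⟨f, by simpa using hext (.inl rfl), by simpa [hab.symm] using hext (.inr rfl),
    fun _ _ hxy => hf trivial trivial hxy⟩
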